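/- arXiv:math/0309365 — 2 statements merged into one kernel-verified Lean document; each statement's English description precedes it below -/
import Mathlib

section
/- In M_n(ℂ) with the Schatten p-norm, 0 < p < ∞, p ≠ 2, two matrices ξ, η satisfy ‖ξ+η‖_p^p + ‖ξ-η‖_p^p = 2(‖ξ‖_p^p + ‖η‖_p^p) if and only if ξη* = ξ*η = 0. -/
open Matrix

/-- `‖a‖_p^p = Tr((a*a)^{p/2})`, the `p`-th power of the Schatten `p`-norm,
with the fractional power given by functional calculus. -/
noncomputable def schattenPowP {n : ℕ} (a : Matrix (Fin n) (Fin n) ℂ) (p : ℝ) : ℂ :=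
  (cfc (fun t : ℝ => t ^ (p / 2)) (aᴴ * a)).trace

/-- Sum of `f` over the (real parts of the) eigenvalues, with multiplicity. -/
noncomputable def traceFun {ι : Type*} [Fintype ι] [DecidableEq ι] (f : ℝ → ℝ)
    (A : Matrix ι ι ℂ) : ℝ :=
  (A.charpoly.roots.map (fun z : ℂ => f z.re)).sum

section

open scoped ComplexOrder

variable {ι κ : Type*} [Fintype ι] [DecidableEq ι] [Fintype κ] [DecidableEq κ]

lemma traceFun_hermitian (f : ℝ → ℝ) {A : Matrix ι ι ℂ} (hA : A.IsHermitian) :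
    traceFun f A = ∑ i, f (hA.eigenvalues i) := by
  unfold traceFun
  rw [hA.roots_charpoly_eq_eigenvalues, Multiset.map_map]
  simp

lemma traceFun_congr (f : ℝ → ℝ) {A : Matrix ι ι ℂ} {B : Matrix ι ι ℂ}
    (h : A.charpoly = B.charpoly) : traceFun f A = traceFun f B := by
  unfold traceFun; rw [h]

lemma trace_cfc_eq (f : ℝ → ℝ) {A : Matrix ι ι ℂ} (hA : A.IsHermitian) :
    (cfc f A).trace = (traceFun f A : ℂ) := by
  rw [traceFun_hermitian f hA, hA.cfc_eq f, IsHermitian.cfc, Unitary.conjStarAlgAut_apply,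
    trace_mul_comm, ← mul_assoc]
  simp [trace]

lemma traceFun_blockDiag (f : ℝ → ℝ) (A : Matrix ι ι ℂ) (B : Matrix κ κ ℂ) :
    traceFun f (fromBlocks A 0 0 B) = traceFun f A + traceFun f B := by
  unfold traceFun
  rw [charpoly_fromBlocks_zero₁₂, Polynomial.roots_mul, Multiset.map_add, Multiset.sum_add]
  exact mul_ne_zero (charpoly_monic _).ne_zero (charpoly_monic _).ne_zero

lemma traceFun_zero (f : ℝ → ℝ) (h0 : f 0 = 0) : traceFun f (0 : Matrix ι ι ℂ) = 0 := by
  unfold traceFun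
  simp [h0, Multiset.map_nsmul, Multiset.sum_nsmul]

/-- Schur-Jensen inequality and its equality case. -/
lemma schur_jensen {f : ℝ → ℝ} (hf : StrictConvexOn ℝ (Set.Ici 0) f) {M : Matrix ι ι ℂ}
    (hM : M.PosSemidef) :
    ∑ i, f (M i i).re ≤ traceFun f M ∧
      (∑ i, f (M i i).re = traceFun f M → ∀ i k, i ≠ k → M i k = 0) := by
  have hH := hM.isHermitian
  set V : Matrix ι ι ℂ := (hH.eigenvectorUnitary : Matrix ι ι ℂ) with hV
  set l := hH.eigenvalues with hl
  have hl0 : ∀ j, 0 ≤ l j := fun j => hM.eigenvalues_nonneg j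
  have h1 : V * Vᴴ = 1 := Unitary.coe_mul_star_self hH.eigenvectorUnitary
  have h2 : Vᴴ * V = 1 := Unitary.coe_star_mul_self hH.eigenvectorUnitary
  have hentry : ∀ i k, M i k = ∑ j, V i j * (l j : ℂ) * star (V k j) := by
    intro i k
    have := hH.spectral_theorem
    rw [Unitary.conjStarAlgAut_apply] at this
    conv_lhs => rw [this]
    rw [mul_apply]
    refine Finset.sum_congr rfl fun j _ => ?_
    rw [mul_diagonal]
    rfl
  set w : ι → ι → ℝ := fun i j => Complex.normSq (V i j) with hw
  have hw0 : ∀ i j, 0 ≤ w i j := fun i j => Complex.normSq_nonneg _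
  have hwc : ∀ i j, (w i j : ℂ) = V i j * star (V i j) := fun i j => by
    simp [hw, Complex.mul_conj]
  have hw1 : ∀ i, ∑ j, w i j = 1 := by
    intro i
    have := congrFun (congrFun h1 i) i
    rw [mul_apply, one_apply_eq] at this
    apply Complex.ofReal_injective
    push_cast
    rw [← this]
    exact Finset.sum_congr rfl fun j _ => by rw [hwc]; rfl
  have hw2 : ∀ j, ∑ i, w i j = 1 := by
    intro j
    have := congrFun (congrFun h2 j) j
    rw [mul_apply, one_apply_eq] at this
    apply Complex.ofReal_injective
    push_cast
    rw [← this]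
    exact Finset.sum_congr rfl fun i _ => by rw [hwc, mul_comm]; rfl
  have hdiagC : ∀ i, M i i = ((∑ j, w i j • l j : ℝ) : ℂ) := by
    intro i
    rw [hentry]
    push_cast
    refine Finset.sum_congr rfl fun j _ => ?_
    rw [smul_eq_mul]
    push_cast
    rw [hwc]; ring
  have hdiag : ∀ i, (M i i).re = ∑ j, w i j • l j := by
    intro i; rw [hdiagC]; simp
  have hJ : ∀ i, f (M i i).re ≤ ∑ j, w i j • f (l j) := by
    intro i
    rw [hdiag]
    exact hf.convexOn.map_sum_le (fun j _ => hw0 i j) (hw1 i) (fun j _ => hl0 j)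
  have hT : traceFun f M = ∑ i, ∑ j, w i j • f (l j) := by
    rw [traceFun_hermitian f hH, Finset.sum_comm]
    refine Finset.sum_congr rfl fun j _ => ?_
    rw [← Finset.sum_smul, hw2, one_smul]
  refine ⟨hT ▸ Finset.sum_le_sum fun i _ => hJ i, fun heq i k hik => ?_⟩
  rw [hT, Finset.sum_eq_sum_iff_of_le fun i _ => hJ i] at heq
  have hi := heq i (Finset.mem_univ i)
  rw [hdiag, hf.map_sum_eq_iff' (fun j _ => hw0 i j) (hw1 i) (fun j _ => hl0 j)] at hi
  rw [hentry]
  have : ∀ j, V i j * (l j : ℂ) * star (V k j) = M i i * (V i j * star (V k j)) := by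
    intro j
    by_cases hz : V i j = 0
    · simp [hz]
    · have := hi j (Finset.mem_univ j) (by simpa [hw] using hz)
      rw [hdiagC, ← this]; ring
  rw [Finset.sum_congr rfl fun j _ => this j, ← Finset.mul_sum]
  have h3 := congrFun (congrFun h1 i) k
  rw [mul_apply, one_apply_ne hik] at h3
  have h4 : ∑ j, V i j * star (V k j) = 0 := h3
  rw [h4, mul_zero]

lemma pinching {f : ℝ → ℝ} (hf : StrictConvexOn ℝ (Set.Ici 0) f)
    {A : Matrix ι ι ℂ} {B : Matrix κ κ ℂ} {X : Matrix ι κ ℂ} {Y : Matrix κ ι ℂ}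
    (hM : (fromBlocks A X Y B).PosSemidef) :
    traceFun f A + traceFun f B ≤ traceFun f (fromBlocks A X Y B) ∧
      (traceFun f A + traceFun f B = traceFun f (fromBlocks A X Y B) → X = 0) := by
  have hH := hM.isHermitian
  rw [isHermitian_fromBlocks_iff] at hH
  obtain ⟨hA, -, -, hB⟩ := hH
  set U : Matrix ι ι ℂ := (hA.eigenvectorUnitary : Matrix ι ι ℂ) with hU
  set V : Matrix κ κ ℂ := (hB.eigenvectorUnitary : Matrix κ κ ℂ) with hV
  have hU1 : U * Uᴴ = 1 := Unitary.coe_mul_star_self hA.eigenvectorUnitary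
  have hU2 : Uᴴ * U = 1 := Unitary.coe_star_mul_self hA.eigenvectorUnitary
  have hV1 : V * Vᴴ = 1 := Unitary.coe_mul_star_self hB.eigenvectorUnitary
  have hV2 : Vᴴ * V = 1 := Unitary.coe_star_mul_self hB.eigenvectorUnitary
  have hAd : Uᴴ * A * U = diagonal (fun i => (hA.eigenvalues i : ℂ)) := by
    have := hA.spectral_theorem
    rw [Unitary.conjStarAlgAut_apply] at this
    replace this : A = U * diagonal (fun i => (hA.eigenvalues i : ℂ)) * Uᴴ := this
    conv_lhs => rw [this]
    rw [show Uᴴ * (U * diagonal (fun i => (hA.eigenvalues i : ℂ)) * Uᴴ) * U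
      = (Uᴴ * U) * diagonal (fun i => (hA.eigenvalues i : ℂ)) * (Uᴴ * U) by
        simp only [Matrix.mul_assoc], hU2, Matrix.one_mul, Matrix.mul_one]
  have hBd : Vᴴ * B * V = diagonal (fun i => (hB.eigenvalues i : ℂ)) := by
    have := hB.spectral_theorem
    rw [Unitary.conjStarAlgAut_apply] at this
    replace this : B = V * diagonal (fun i => (hB.eigenvalues i : ℂ)) * Vᴴ := this
    conv_lhs => rw [this]
    rw [show Vᴴ * (V * diagonal (fun i => (hB.eigenvalues i : ℂ)) * Vᴴ) * V
      = (Vᴴ * V) * diagonal (fun i => (hB.eigenvalues i : ℂ)) * (Vᴴ * V) by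
        simp only [Matrix.mul_assoc], hV2, Matrix.one_mul, Matrix.mul_one]
  set W : Matrix (ι ⊕ κ) (ι ⊕ κ) ℂ := fromBlocks U 0 0 V with hW
  have hW1 : W * Wᴴ = 1 := by
    simp [hW, fromBlocks_conjTranspose, fromBlocks_multiply, hU1, hV1]
  have hN : Wᴴ * fromBlocks A X Y B * W =
      fromBlocks (diagonal (fun i => (hA.eigenvalues i : ℂ))) (Uᴴ * X * V) (Vᴴ * Y * U)
        (diagonal (fun i => (hB.eigenvalues i : ℂ))) := by
    simp [hW, fromBlocks_conjTranspose, fromBlocks_multiply, hAd, hBd]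
  have hNp : (Wᴴ * fromBlocks A X Y B * W).PosSemidef := hM.conjTranspose_mul_mul_same W
  have hNt : traceFun f (Wᴴ * fromBlocks A X Y B * W) = traceFun f (fromBlocks A X Y B) := by
    apply traceFun_congr
    rw [charpoly_mul_comm, ← Matrix.mul_assoc, hW1, Matrix.one_mul]
  have hSJ := schur_jensen hf hNp
  rw [hNt] at hSJ
  have hs : ∑ i, f ((Wᴴ * fromBlocks A X Y B * W) i i).re = traceFun f A + traceFun f B := by
    rw [hN, traceFun_hermitian f hA, traceFun_hermitian f hB]
    simp
  rw [hs] at hSJ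
  refine ⟨hSJ.1, fun h => ?_⟩
  have h0 : Uᴴ * X * V = 0 := by
    ext i k
    have := hSJ.2 h (Sum.inl i) (Sum.inr k) (by simp)
    rw [hN] at this
    simpa using this
  calc X = (U * Uᴴ) * X * (V * Vᴴ) := by rw [hU1, hV1, Matrix.one_mul, Matrix.mul_one]
    _ = U * (Uᴴ * X * V) * Vᴴ := by simp only [Matrix.mul_assoc]
    _ = 0 := by rw [h0]; simp

lemma traceFun_column {f : ℝ → ℝ} (h0 : f 0 = 0) (ξ η : Matrix ι ι ℂ) :
    (fromBlocks (ξ * ξᴴ) (ξ * ηᴴ) (η * ξᴴ) (η * ηᴴ)).PosSemidef ∧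
    traceFun f (fromBlocks (ξ * ξᴴ) (ξ * ηᴴ) (η * ξᴴ) (η * ηᴴ))
      = traceFun f (ξᴴ * ξ + ηᴴ * η) := by
  set T : Matrix (ι ⊕ ι) (ι ⊕ ι) ℂ := fromBlocks ξ 0 η 0 with hT
  have e1 : T * Tᴴ = fromBlocks (ξ * ξᴴ) (ξ * ηᴴ) (η * ξᴴ) (η * ηᴴ) := by
    simp [hT, fromBlocks_conjTranspose, fromBlocks_multiply]
  have e2 : Tᴴ * T = fromBlocks (ξᴴ * ξ + ηᴴ * η) 0 0 0 := by
    simp [hT, fromBlocks_conjTranspose, fromBlocks_multiply]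
  refine ⟨e1 ▸ posSemidef_self_mul_conjTranspose T, ?_⟩
  rw [← e1, traceFun_congr f (charpoly_mul_comm T Tᴴ), e2, traceFun_blockDiag,
    traceFun_zero f h0, add_zero]

lemma traceFun_adj (f : ℝ → ℝ) (ξ : Matrix ι ι ℂ) :
    traceFun f (ξ * ξᴴ) = traceFun f (ξᴴ * ξ) :=
  traceFun_congr f (charpoly_mul_comm _ _)

lemma superadd {f : ℝ → ℝ} (hf : StrictConvexOn ℝ (Set.Ici 0) f) (h0 : f 0 = 0)
    (ξ η : Matrix ι ι ℂ) :
    traceFun f (ξᴴ * ξ) + traceFun f (ηᴴ * η) ≤ traceFun f (ξᴴ * ξ + ηᴴ * η) ∧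
    (traceFun f (ξᴴ * ξ) + traceFun f (ηᴴ * η) = traceFun f (ξᴴ * ξ + ηᴴ * η) →
      ξ * ηᴴ = 0) := by
  obtain ⟨hp, ht⟩ := traceFun_column h0 ξ η
  have := pinching hf hp
  rwa [ht, traceFun_adj, traceFun_adj] at this

lemma midpoint_ineq {f : ℝ → ℝ} (hf : StrictConvexOn ℝ (Set.Ici 0) f)
    (ξ η : Matrix ι ι ℂ) :
    2 * traceFun f (ξᴴ * ξ + ηᴴ * η) ≤
      traceFun f ((ξ + η)ᴴ * (ξ + η)) + traceFun f ((ξ - η)ᴴ * (ξ - η)) := by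
  set T : Matrix (ι ⊕ ι) (ι ⊕ ι) ℂ := fromBlocks ξ η η ξ with hT
  set S := ξᴴ * ξ + ηᴴ * η with hS
  set R := ξᴴ * η + ηᴴ * ξ with hR
  have e1 : Tᴴ * T = fromBlocks S R R S := by
    simp [hT, fromBlocks_conjTranspose, fromBlocks_multiply, hS, hR, add_comm]
  have hp : (fromBlocks S R R S).PosSemidef := e1 ▸ posSemidef_conjTranspose_mul_self T
  set P : Matrix (ι ⊕ ι) (ι ⊕ ι) ℂ := fromBlocks 1 1 1 (-1) with hP
  set D : Matrix (ι ⊕ ι) (ι ⊕ ι) ℂ := fromBlocks (S + R) 0 0 (S - R) with hD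
  have hPP : P * P = (2 : ℂ) • 1 := by
    rw [← fromBlocks_one, fromBlocks_smul]
    simp [hP, fromBlocks_multiply, two_smul]
  have hPM : P * (P * D) = (2 : ℂ) • D := by
    rw [← Matrix.mul_assoc, hPP]; simp
  have hM : fromBlocks S R R S = ((1/2 : ℂ) • (P * D)) * P := by
    rw [hP, hD, fromBlocks_multiply, fromBlocks_smul, fromBlocks_multiply]
    congr 1 <;> ext i j <;> simp <;> ring
  have ht : traceFun f (fromBlocks S R R S) = traceFun f (S + R) + traceFun f (S - R) := by
    rw [← traceFun_blockDiag, ← hD]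
    apply traceFun_congr
    rw [hM, charpoly_mul_comm, Matrix.mul_smul, hPM, smul_smul]
    norm_num
  have := (pinching hf hp).1
  rw [ht] at this
  have a1 : (ξ + η)ᴴ * (ξ + η) = S + R := by
    rw [conjTranspose_add, hS, hR]; noncomm_ring
  have a2 : (ξ - η)ᴴ * (ξ - η) = S - R := by
    rw [conjTranspose_sub, hS, hR]; noncomm_ring
  rw [a1, a2]
  linarith

lemma clarkson_iff {f : ℝ → ℝ} (hf : StrictConvexOn ℝ (Set.Ici 0) f) (h0 : f 0 = 0)
    (ξ η : Matrix ι ι ℂ) :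
    traceFun f ((ξ + η)ᴴ * (ξ + η)) + traceFun f ((ξ - η)ᴴ * (ξ - η))
      = 2 * (traceFun f (ξᴴ * ξ) + traceFun f (ηᴴ * η)) ↔ (ξ * ηᴴ = 0 ∧ ξᴴ * η = 0) := by
  constructor
  · intro h
    constructor
    · have h1 := superadd hf h0 ξ η
      have h2 := midpoint_ineq hf ξ η
      exact h1.2 (by linarith [h1.1])
    · have h1 := superadd hf h0 ξᴴ ηᴴ
      have h2 := midpoint_ineq hf ξᴴ ηᴴ
      rw [← conjTranspose_add, ← conjTranspose_sub] at h2
      simp only [conjTranspose_conjTranspose] at h1 h2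
      rw [traceFun_adj, traceFun_adj] at h1
      rw [traceFun_adj f (ξ + η), traceFun_adj f (ξ - η)] at h2
      exact h1.2 (by linarith [h1.1])
  · rintro ⟨h1, h2⟩
    have h1' : η * ξᴴ = 0 := by
      have := congrArg conjTranspose h1
      simpa using this
    have h2' : ηᴴ * ξ = 0 := by
      have := congrArg conjTranspose h2
      simpa using this
    have ht := (traceFun_column (f := f) h0 ξ η).2
    rw [h1, h1', traceFun_blockDiag, traceFun_adj, traceFun_adj] at ht
    have a1 : (ξ + η)ᴴ * (ξ + η) = ξᴴ * ξ + ηᴴ * η := by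
      simp [Matrix.add_mul, Matrix.mul_add, h2, h2']
    have a2 : (ξ - η)ᴴ * (ξ - η) = ξᴴ * ξ + ηᴴ * η := by
      simp [Matrix.sub_mul, Matrix.mul_sub, h2, h2']
    rw [a1, a2, ← ht]; ring

lemma traceFun_neg (f : ℝ → ℝ) (A : Matrix ι ι ℂ) :
    traceFun (fun t => - f t) A = - traceFun f A := by
  unfold traceFun
  simp

end

/-- Equality case of the noncommutative Clarkson inequality in `M_n(ℂ)` with
the Schatten `p`-norm, `0 < p < ∞`, `p ≠ 2`. -/
theorem schatten_clarkson_equality_iff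
    {n : ℕ} (p : ℝ) (hp0 : 0 < p) (hp2 : p ≠ 2)
    (ξ η : Matrix (Fin n) (Fin n) ℂ) :
    schattenPowP (ξ + η) p + schattenPowP (ξ - η) p
        = 2 * (schattenPowP ξ p + schattenPowP η p)
      ↔ (ξ * ηᴴ = 0 ∧ ξᴴ * η = 0) := by
  have key : ∀ a : Matrix (Fin n) (Fin n) ℂ, schattenPowP a p
      = (traceFun (fun t : ℝ => t ^ (p / 2)) (aᴴ * a) : ℂ) := fun a =>
    trace_cfc_eq _ (isHermitian_conjTranspose_mul_self a)
  have h0 : (0 : ℝ) ^ (p / 2) = 0 := Real.zero_rpow (by positivity)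
  rw [key, key, key, key]
  norm_cast
  rcases lt_or_gt_of_ne hp2 with h | h
  · have hc : StrictConvexOn ℝ (Set.Ici 0) (fun t : ℝ => - t ^ (p / 2)) :=
      (Real.strictConcaveOn_rpow (by positivity) (by linarith)).neg
    rw [← clarkson_iff hc (by simp [h0])]
    simp only [traceFun_neg]
    constructor <;> intro h <;> linarith
  · exact clarkson_iff (strictConvexOn_rpow (by linarith)) h0 ξ η
end

section
/- Let T : L^p(μ) → L^p(ν) be a surjective linear isometry between σ-finite L^p spaces, 1 < p < ∞, p ≠ 2, and suppose T maps indicator-supported bands to bands: for each measurable set A there is a measurable set A' with T(1_A · L^p(μ)) = 1_{A'} · L^p(ν). Then A ↦ A' (modulo null sets) is a Boolean isomorphism of the measure algebras: it is bijective, and (A ∪ B)' = A' ∪ B', (A ∩ B)' = A' ∩ B', (A^c)' = (A')^c up to null sets. -/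
open MeasureTheory ENNReal

/-- The band of an `L^p` space determined by a set `A`: functions vanishing
a.e. off `A`. -/
def lpBand {Ω : Type*} [MeasurableSpace Ω] (μ : Measure Ω) (p : ℝ≥0∞)
    (A : Set Ω) : Set (Lp ℂ p μ) :=
  {f | ∀ᵐ ω ∂μ, ω ∉ A → (f : Ω → ℂ) ω = 0}


section BandHelpers

open Filter Topology

variable {Ω : Type*} [MeasurableSpace Ω] {μ : Measure Ω} {p : ℝ≥0∞} [Fact (1 ≤ p)]

/-- Restriction (multiplication by an indicator) on `L^p`. -/
noncomputable def bandProj (μ : Measure Ω) (p : ℝ≥0∞) [Fact (1 ≤ p)] (A : Set Ω)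
    (hA : MeasurableSet A) : Lp ℂ p μ →L[ℂ] Lp ℂ p μ :=
  LinearMap.mkContinuous
    { toFun := fun f => ((Lp.memLp f).indicator hA).toLp (A.indicator f)
      map_add' := by
        intro f g
        rw [← MemLp.toLp_add, MemLp.toLp_eq_toLp_iff]
        filter_upwards [Lp.coeFn_add f g] with x hx
        by_cases h : x ∈ A
        · simp only [Set.indicator_of_mem h, Pi.add_apply]
          exact hx
        · simp [h]
      map_smul' := by
        intro c f
        rw [RingHom.id_apply, ← MemLp.toLp_const_smul, MemLp.toLp_eq_toLp_iff]
        filter_upwards [Lp.coeFn_smul c f] with x hx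
        by_cases h : x ∈ A
        · simp only [Set.indicator_of_mem h, Pi.smul_apply]
          exact hx
        · simp [h] }
    1 (by
      intro f
      simp only [LinearMap.coe_mk, AddHom.coe_mk, one_mul]
      rw [Lp.norm_toLp, Lp.norm_def]
      exact ENNReal.toReal_mono (Lp.eLpNorm_ne_top f) (eLpNorm_indicator_le _))

theorem bandProj_coe (A : Set Ω) (hA : MeasurableSet A) (f : Lp ℂ p μ) :
    (bandProj μ p A hA f : Ω → ℂ) =ᵐ[μ] A.indicator f := by
  have h : bandProj μ p A hA f = ((Lp.memLp f).indicator hA).toLp (A.indicator f) := by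
    unfold bandProj
    rw [LinearMap.mkContinuous_apply]
    simp only [LinearMap.coe_mk, AddHom.coe_mk]
  rw [h]
  have h2 : MemLp (A.indicator (f : Ω → ℂ)) p μ := (Lp.memLp f).indicator hA
  exact h2.coeFn_toLp

theorem bandProj_mem (A : Set Ω) (hA : MeasurableSet A) (f : Lp ℂ p μ) :
    bandProj μ p A hA f ∈ lpBand μ p A := by
  filter_upwards [bandProj_coe A hA f] with x hx h
  rw [hx]; simp [h]

theorem sub_bandProj_mem (A : Set Ω) (hA : MeasurableSet A) (f : Lp ℂ p μ) :
    f - bandProj μ p A hA f ∈ lpBand μ p Aᶜ := by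
  filter_upwards [bandProj_coe A hA f, Lp.coeFn_sub f (bandProj μ p A hA f)] with x hx h2 h
  rw [h2, Pi.sub_apply, hx]; simp only [Set.mem_compl_iff, not_not] at h; simp [h]

theorem bandProj_eq_self_iff (A : Set Ω) (hA : MeasurableSet A) (f : Lp ℂ p μ) :
    bandProj μ p A hA f = f ↔ f ∈ lpBand μ p A := by
  constructor
  · intro h; rw [← h]; exact bandProj_mem A hA f
  · intro h
    apply Lp.ext
    filter_upwards [bandProj_coe A hA f, h] with x hx h2
    rw [hx]
    by_cases h3 : x ∈ A
    · simp [h3]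
    · simp [h3, h2 h3]

theorem bandProj_eq_zero (A : Set Ω) (hA : MeasurableSet A) (f : Lp ℂ p μ)
    (h : f ∈ lpBand μ p Aᶜ) : bandProj μ p A hA f = 0 := by
  apply Lp.ext
  filter_upwards [bandProj_coe A hA f, h, Lp.coeFn_zero ℂ p μ] with x hx h2 h0
  rw [hx, h0]
  by_cases h3 : x ∈ A
  · simp [h3, h2 (by simpa using h3)]
  · simp [h3]

theorem lpBand_add {A : Set Ω} {f g : Lp ℂ p μ} (hf : f ∈ lpBand μ p A)
    (hg : g ∈ lpBand μ p A) : f + g ∈ lpBand μ p A := by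
  filter_upwards [hf, hg, Lp.coeFn_add f g] with x h1 h2 h3 h
  rw [h3, Pi.add_apply, h1 h, h2 h, add_zero]

theorem lpBand_mono {A B : Set Ω} (h : A ≤ᵐ[μ] B) : lpBand μ p A ⊆ lpBand μ p B := by
  intro f hf
  filter_upwards [hf, h] with x h1 h2 h3
  exact h1 fun h4 => h3 (h2 h4)

theorem exists_pos_Lp [SigmaFinite μ] (hp : p ≠ ∞) :
    ∃ w : Lp ℂ p μ, ∀ᵐ x ∂μ, (w : Ω → ℂ) x ≠ 0 := by
  obtain ⟨g, hg, hgm, hgi⟩ := exists_pos_lintegral_lt_of_sigmaFinite μ (ε := 1) one_ne_zero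
  have h1 : (1 : ℝ≥0∞) ≤ p := Fact.out
  have hp0 : p ≠ 0 := (zero_lt_one.trans_le h1).ne'
  have hpr : 0 < p.toReal := ENNReal.toReal_pos hp0 hp
  let w : Ω → ℂ := fun x => (((g x) ^ (1 / p.toReal) : NNReal) : ℂ)
  have hw : MemLp w p μ := by
    refine ⟨?_, ?_⟩
    · have : Measurable w := by
        have h2 : Measurable fun x => (g x) ^ (1 / p.toReal) := hgm.pow_const _
        exact Complex.measurable_ofReal.comp h2.coe_nnreal_real
      exact this.aestronglyMeasurable
    · rw [eLpNorm_lt_top_iff_lintegral_rpow_enorm_lt_top hp0 hp]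
      refine lt_of_le_of_lt (le_of_eq ?_) (hgi.trans one_lt_top)
      refine lintegral_congr fun x => ?_
      have : ‖w x‖ₑ = ((g x) ^ (1 / p.toReal) : NNReal) := by
        rw [enorm_eq_nnnorm]
        congr 1
        ext
        simp only [w, coe_nnnorm, Complex.norm_real, Real.norm_eq_abs, NNReal.abs_eq]
      rw [this, ← ENNReal.coe_rpow_of_nonneg _ hpr.le, ← NNReal.rpow_mul,
        one_div_mul_cancel hpr.ne', NNReal.rpow_one]
  refine ⟨hw.toLp w, ?_⟩
  filter_upwards [hw.coeFn_toLp] with x hx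
  rw [hx]
  have := (NNReal.rpow_pos (p := 1 / p.toReal) (hg x)).ne'
  simp only [w]
  exact_mod_cast this

theorem le_of_lpBand_subset [SigmaFinite μ] (hp : p ≠ ∞) {A B : Set Ω}
    (hA : MeasurableSet A) (h : lpBand μ p A ⊆ lpBand μ p B) : A ≤ᵐ[μ] B := by
  obtain ⟨w, hw⟩ := exists_pos_Lp (μ := μ) hp
  filter_upwards [h (bandProj_mem A hA w), bandProj_coe A hA w, hw] with x h1 h2 h3 h4
  by_contra h5
  apply h3
  have := h1 h5
  rw [h2] at this
  have hx : x ∈ A := h4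
  simpa [hx] using this

theorem eq_of_lpBand_eq [SigmaFinite μ] (hp : p ≠ ∞) {A B : Set Ω}
    (hA : MeasurableSet A) (hB : MeasurableSet B)
    (h : lpBand μ p A = lpBand μ p B) : A =ᵐ[μ] B :=
  (le_of_lpBand_subset hp hA h.le).antisymm (le_of_lpBand_subset hp hB h.ge)

theorem lpBand_congr {A B : Set Ω} (h : A =ᵐ[μ] B) : lpBand μ p A = lpBand μ p B :=
  (lpBand_mono h.le).antisymm (lpBand_mono h.symm.le)

theorem lpBand_inter (A B : Set Ω) :
    lpBand μ p (A ∩ B) = lpBand μ p A ∩ lpBand μ p B := by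
  apply Set.Subset.antisymm
  · intro f hf
    exact ⟨lpBand_mono (Eventually.of_forall fun _ h => h.1) hf,
      lpBand_mono (Eventually.of_forall fun _ h => h.2) hf⟩
  · rintro f ⟨h1, h2⟩
    change ∀ᵐ x ∂μ, x ∉ A ∩ B → (f : Ω → ℂ) x = 0
    change ∀ᵐ x ∂μ, x ∉ A → (f : Ω → ℂ) x = 0 at h1
    change ∀ᵐ x ∂μ, x ∉ B → (f : Ω → ℂ) x = 0 at h2
    filter_upwards [h1, h2] with x h1 h2 h
    by_cases hA : x ∈ A
    · exact h2 fun hB => h ⟨hA, hB⟩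
    · exact h1 hA

theorem swap_isClosed (Q : Lp ℂ p μ →L[ℂ] Lp ℂ p μ) (a b : Ω → ℂ) :
    IsClosed {f : Lp ℂ p μ | ∀ᵐ x ∂μ, (Q f : Ω → ℂ) x * a x = (f : Ω → ℂ) x * b x} := by
  apply IsSeqClosed.isClosed
  intro u f hu hlim
  have hQ : Tendsto (fun n => Q (u n)) atTop (𝓝 (Q f)) := (Q.continuous.tendsto f).comp hlim
  obtain ⟨n1, hn1, h1⟩ := (tendstoInMeasure_of_tendsto_Lp hlim).exists_seq_tendsto_ae
  have hQ' := hQ.comp hn1.tendsto_atTop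
  obtain ⟨n2, hn2, h2⟩ := (tendstoInMeasure_of_tendsto_Lp hQ').exists_seq_tendsto_ae
  have hall : ∀ᵐ x ∂μ, ∀ n, (Q (u n) : Ω → ℂ) x * a x = (u n : Ω → ℂ) x * b x :=
    ae_all_iff.2 hu
  filter_upwards [h1, h2, hall] with x h1 h2 h3
  have t1 := (h1.comp hn2.tendsto_atTop).mul_const (b x)
  have t2 := h2.mul_const (a x)
  refine tendsto_nhds_unique t2 (t1.congr fun n => ?_)
  exact (h3 _).symm

/-- A continuous operator commuting with all restrictions acts like a multiplication operator. -/
theorem swap_of_commute (hp : p ≠ ∞) (Q : Lp ℂ p μ →L[ℂ] Lp ℂ p μ)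
    (hQ : ∀ A (hA : MeasurableSet A) f, Q (bandProj μ p A hA f) = bandProj μ p A hA (Q f))
    (f g : Lp ℂ p μ) :
    ∀ᵐ x ∂μ, (Q f : Ω → ℂ) x * (g : Ω → ℂ) x = (f : Ω → ℂ) x * (Q g : Ω → ℂ) x := by
  induction f using Lp.induction hp with
  | isClosed => exact swap_isClosed Q _ _
  | add hf hg _ h1 h2 =>
    rw [map_add]
    filter_upwards [h1, h2, Lp.coeFn_add (Q (hf.toLp _)) (Q (hg.toLp _)),
      Lp.coeFn_add (hf.toLp _) (hg.toLp _)] with x h1 h2 h3 h4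
    rw [h3, h4, Pi.add_apply, Pi.add_apply, add_mul, add_mul, h1, h2]
  | indicatorConst c hs hμs =>
    rename_i s
    induction g using Lp.induction hp with
    | isClosed =>
      have := swap_isClosed Q (Lp.simpleFunc.indicatorConst p hs hμs.ne c : Lp ℂ p μ)
        (Q (Lp.simpleFunc.indicatorConst p hs hμs.ne c : Lp ℂ p μ))
      convert this using 3 with g
      refine eventually_congr (Eventually.of_forall fun x => ?_)
      constructor
      · intro h; rw [mul_comm, ← h, mul_comm]
      · intro h; rw [mul_comm, ← h, mul_comm]
    | add hf hg _ h1 h2 =>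
      rw [map_add]
      filter_upwards [h1, h2, Lp.coeFn_add (Q (hf.toLp _)) (Q (hg.toLp _)),
        Lp.coeFn_add (hf.toLp _) (hg.toLp _)] with x h1 h2 h3 h4
      rw [h3, h4, Pi.add_apply, Pi.add_apply, mul_add, mul_add, h1, h2]
    | indicatorConst d ht hμt =>
      rename_i t
      rw [Lp.simpleFunc.coe_indicatorConst, Lp.simpleFunc.coe_indicatorConst]
      set u := indicatorConstLp p hs hμs.ne c with hu
      set v := indicatorConstLp p ht hμt.ne d with hv
      have cu : (u : Ω → ℂ) =ᵐ[μ] s.indicator fun _ => c := indicatorConstLp_coeFn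
      have cv : (v : Ω → ℂ) =ᵐ[μ] t.indicator fun _ => d := indicatorConstLp_coeFn
      have key : d • bandProj μ p t ht u = c • bandProj μ p s hs v := by
        apply Lp.ext
        filter_upwards [cu, cv, bandProj_coe t ht u, bandProj_coe s hs v,
          Lp.coeFn_smul d (bandProj μ p t ht u), Lp.coeFn_smul c (bandProj μ p s hs v)]
          with x h1 h2 h3 h4 h5 h6
        rw [h5, h6, Pi.smul_apply, Pi.smul_apply, h3, h4]
        by_cases hxs : x ∈ s <;> by_cases hxt : x ∈ t <;> simp [hxs, hxt, h1, h2, mul_comm]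
      have key2 : d • bandProj μ p t ht (Q u) = c • bandProj μ p s hs (Q v) := by
        rw [← hQ, ← hQ, ← Q.map_smul, ← Q.map_smul, key]
      have e1 := Lp.coeFn_smul d (bandProj μ p t ht (Q u))
      rw [key2] at e1
      filter_upwards [cu, cv, bandProj_coe t ht (Q u), bandProj_coe s hs (Q v), e1,
          Lp.coeFn_smul c (bandProj μ p s hs (Q v))]
          with x h1 h2 h3 h4 h5 h6
      rw [h5, Pi.smul_apply, Pi.smul_apply, h3, h4] at h6
      rw [h1, h2]
      by_cases hxs : x ∈ s <;> by_cases hxt : x ∈ t <;>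
        simp_all [mul_comm]

end BandHelpers

/-- If a surjective linear isometry of σ-finite `L^p` spaces, `1 < p < ∞`,
`p ≠ 2`, maps bands to bands via `A ↦ Φ A`, then `Φ` induces a Boolean
isomorphism of the measure algebras. -/
theorem band_map_is_boolean_isomorphism
    {Ω₁ Ω₂ : Type*} [MeasurableSpace Ω₁] [MeasurableSpace Ω₂]
    (μ : Measure Ω₁) (ν : Measure Ω₂) [SigmaFinite μ] [SigmaFinite ν]
    (p : ℝ≥0∞) [Fact (1 ≤ p)] (hp_top : p ≠ ∞) (hp1 : 1 < p.toReal)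
    (hp2 : p.toReal ≠ 2)
    (T : Lp ℂ p μ ≃ₗᵢ[ℂ] Lp ℂ p ν)
    (Φ : Set Ω₁ → Set Ω₂)
    (hΦmeas : ∀ A : Set Ω₁, MeasurableSet A → MeasurableSet (Φ A))
    (hΦ : ∀ A : Set Ω₁, MeasurableSet A →
      T '' lpBand μ p A = lpBand ν p (Φ A)) :
    (∀ A B : Set Ω₁, MeasurableSet A → MeasurableSet B →
        Φ (A ∪ B) =ᵐ[ν] (Φ A ∪ Φ B : Set Ω₂)) ∧
    (∀ A B : Set Ω₁, MeasurableSet A → MeasurableSet B →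
        Φ (A ∩ B) =ᵐ[ν] (Φ A ∩ Φ B : Set Ω₂)) ∧
    (∀ A : Set Ω₁, MeasurableSet A → Φ Aᶜ =ᵐ[ν] ((Φ A)ᶜ : Set Ω₂)) ∧
    (∀ A B : Set Ω₁, MeasurableSet A → MeasurableSet B →
        Φ A =ᵐ[ν] Φ B → A =ᵐ[μ] B) ∧
    (∀ B : Set Ω₂, MeasurableSet B → ∃ A : Set Ω₁, MeasurableSet A ∧
        Φ A =ᵐ[ν] B) := by
  have hmem : ∀ A, MeasurableSet A → ∀ f, f ∈ lpBand μ p A ↔ T f ∈ lpBand ν p (Φ A) := by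
    intro A hA f
    rw [← hΦ A hA]
    exact (T.injective.mem_set_image).symm
  have hinter : ∀ A B : Set Ω₁, MeasurableSet A → MeasurableSet B →
      Φ (A ∩ B) =ᵐ[ν] (Φ A ∩ Φ B : Set Ω₂) := by
    intro A B hA hB
    apply eq_of_lpBand_eq hp_top (hΦmeas _ (hA.inter hB)) ((hΦmeas _ hA).inter (hΦmeas _ hB))
    rw [← hΦ _ (hA.inter hB), lpBand_inter, lpBand_inter, Set.image_inter T.injective,
      hΦ A hA, hΦ B hB]
  have hmono : ∀ A B : Set Ω₁, MeasurableSet A → MeasurableSet B → A ⊆ B →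
      Φ A ≤ᵐ[ν] Φ B := by
    intro A B hA hB hAB
    apply le_of_lpBand_subset hp_top (hΦmeas _ hA)
    rw [← hΦ _ hA, ← hΦ _ hB]
    exact Set.image_mono (lpBand_mono (Filter.Eventually.of_forall hAB))
  have hunion : ∀ A B : Set Ω₁, MeasurableSet A → MeasurableSet B →
      Φ (A ∪ B) =ᵐ[ν] (Φ A ∪ Φ B : Set Ω₂) := by
    intro A B hA hB
    apply Filter.EventuallyLE.antisymm
    · apply le_of_lpBand_subset hp_top (hΦmeas _ (hA.union hB))
      rw [← hΦ _ (hA.union hB)]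
      rintro _ ⟨f, hf, rfl⟩
      have h1 : T (bandProj μ p A hA f) ∈ lpBand ν p (Φ A) :=
        (hmem A hA _).1 (bandProj_mem A hA f)
      have h2 : T (f - bandProj μ p A hA f) ∈ lpBand ν p (Φ B) := by
        apply (hmem B hB _).1
        filter_upwards [sub_bandProj_mem A hA f, hf, bandProj_coe A hA f,
          Lp.coeFn_sub f (bandProj μ p A hA f)] with x h1 h2 h3 h4 h5
        by_cases hx : x ∈ A
        · exact h1 (by simpa using hx)
        · rw [h4, Pi.sub_apply, h3, h2 (by simp [hx, h5])]; simp [hx]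
      have h3 : T f = T (bandProj μ p A hA f) + T (f - bandProj μ p A hA f) := by
        rw [← map_add]; congr 1; abel
      rw [h3]
      exact lpBand_add
        (lpBand_mono (Filter.Eventually.of_forall fun _ h => Or.inl h) h1)
        (lpBand_mono (Filter.Eventually.of_forall fun _ h => Or.inr h) h2)
    · filter_upwards [hmono A (A ∪ B) hA (hA.union hB) Set.subset_union_left,
        hmono B (A ∪ B) hB (hA.union hB) Set.subset_union_right] with x h1 h2 h3
      exact h3.elim h1 h2
  have hempty : Φ ∅ =ᵐ[ν] (∅ : Set Ω₂) := by
    apply eq_of_lpBand_eq (p := p) hp_top (hΦmeas _ MeasurableSet.empty) MeasurableSet.empty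
    have h0 : lpBand μ p (∅ : Set Ω₁) = {0} := by
      ext f
      simp only [lpBand, Set.mem_ofPred_eq, Set.mem_singleton_iff, Set.mem_empty_iff_false,
        not_false_eq_true, true_imp_iff]
      exact (Lp.eq_zero_iff_ae_eq_zero).symm
    have h0' : lpBand ν p (∅ : Set Ω₂) = {0} := by
      ext f
      simp only [lpBand, Set.mem_ofPred_eq, Set.mem_singleton_iff, Set.mem_empty_iff_false,
        not_false_eq_true, true_imp_iff]
      exact (Lp.eq_zero_iff_ae_eq_zero).symm
    rw [← hΦ _ MeasurableSet.empty, h0, h0', Set.image_singleton, map_zero]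
  have huniv : Φ Set.univ =ᵐ[ν] (Set.univ : Set Ω₂) := by
    apply eq_of_lpBand_eq (p := p) hp_top (hΦmeas _ MeasurableSet.univ) MeasurableSet.univ
    rw [← hΦ _ MeasurableSet.univ]
    have h1 : lpBand μ p (Set.univ : Set Ω₁) = Set.univ := by
      ext f; simp [lpBand]
    have h2 : lpBand ν p (Set.univ : Set Ω₂) = Set.univ := by
      ext f; simp [lpBand]
    rw [h1, h2, Set.image_univ, T.surjective.range_eq]
  have hcompl : ∀ A : Set Ω₁, MeasurableSet A → Φ Aᶜ =ᵐ[ν] ((Φ A)ᶜ : Set Ω₂) := by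
    intro A hA
    have h1 := hinter A Aᶜ hA hA.compl
    have h2 := hunion A Aᶜ hA hA.compl
    rw [Set.inter_compl_self] at h1
    rw [Set.union_compl_self] at h2
    filter_upwards [h1.mem_iff, h2.mem_iff, hempty.mem_iff, huniv.mem_iff] with x h1 h2 h3 h4
    apply propext
    change x ∈ Φ Aᶜ ↔ x ∉ Φ A
    simp only [Set.mem_inter_iff, Set.mem_union, Set.mem_empty_iff_false, Set.mem_univ] at *
    tauto
  have hcomm : ∀ A (hA : MeasurableSet A) f,
      T (bandProj μ p A hA f) = bandProj ν p (Φ A) (hΦmeas A hA) (T f) := by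
    intro A hA f
    have h1 : T (bandProj μ p A hA f) ∈ lpBand ν p (Φ A) :=
      (hmem A hA _).1 (bandProj_mem A hA f)
    have h2 : T (f - bandProj μ p A hA f) ∈ lpBand ν p (Φ A)ᶜ := by
      rw [← lpBand_congr (hcompl A hA)]
      exact (hmem _ hA.compl _).1 (sub_bandProj_mem A hA f)
    have h3 : T f = T (bandProj μ p A hA f) + T (f - bandProj μ p A hA f) := by
      rw [← map_add]; congr 1; abel
    rw [h3, map_add, (bandProj_eq_self_iff _ _ _).2 h1, bandProj_eq_zero _ _ _ h2, add_zero]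
  refine ⟨hunion, hinter, hcompl, ?_, ?_⟩
  · intro A B hA hB h
    apply eq_of_lpBand_eq (p := p) hp_top hA hB
    apply T.injective.image_injective
    rw [hΦ A hA, hΦ B hB, lpBand_congr h]
  · intro B hB
    let Q : Lp ℂ p μ →L[ℂ] Lp ℂ p μ :=
      ((T.symm.toContinuousLinearEquiv : Lp ℂ p ν →L[ℂ] Lp ℂ p μ).comp
        (bandProj ν p B hB)).comp (T.toContinuousLinearEquiv : Lp ℂ p μ →L[ℂ] Lp ℂ p ν)
    have Qdef : ∀ f, Q f = T.symm (bandProj ν p B hB (T f)) := fun f => rfl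
    have TQ : ∀ f, T (Q f) = bandProj ν p B hB (T f) := by
      intro f; rw [Qdef, T.apply_symm_apply]
    have QQ : ∀ f, Q (Q f) = Q f := by
      intro f
      apply T.injective
      rw [TQ, TQ]
      exact (bandProj_eq_self_iff _ _ _).2 (bandProj_mem _ _ _)
    have projcomm : ∀ A (hA : MeasurableSet A) (f : Lp ℂ p ν),
        bandProj ν p B hB (bandProj ν p A hA f) = bandProj ν p A hA (bandProj ν p B hB f) := by
      intro A hA f
      apply Lp.ext
      filter_upwards [bandProj_coe B hB (bandProj ν p A hA f), bandProj_coe A hA f,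
        bandProj_coe A hA (bandProj ν p B hB f), bandProj_coe B hB f] with x h1 h2 h3 h4
      rw [h1, h3]
      by_cases hxA : x ∈ A <;> by_cases hxB : x ∈ B <;> simp [hxA, hxB, h2, h4]
    have hQ : ∀ A (hA : MeasurableSet A) f,
        Q (bandProj μ p A hA f) = bandProj μ p A hA (Q f) := by
      intro A hA f
      apply T.injective
      rw [TQ, hcomm, hcomm, TQ, projcomm]
    have disj : ∀ f g : Lp ℂ p μ, ∀ᵐ x ∂μ,
        (Q f : Ω₁ → ℂ) x * ((g : Ω₁ → ℂ) x - (Q g : Ω₁ → ℂ) x) = 0 := by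
      intro f g
      have h := swap_of_commute hp_top Q hQ (Q f) (g - Q g)
      rw [QQ, map_sub, QQ, sub_self] at h
      filter_upwards [h, Lp.coeFn_sub g (Q g), Lp.coeFn_zero ℂ p μ] with x h1 h2 h3
      rw [h2, h3, Pi.sub_apply, Pi.zero_apply, mul_zero] at h1
      exact h1
    obtain ⟨w, hw⟩ := exists_pos_Lp (μ := μ) hp_top
    let A : Set Ω₁ := {x | (Q w : Ω₁ → ℂ) x ≠ 0}
    have hA : MeasurableSet A :=
      (Lp.stronglyMeasurable (Q w)).measurable (measurableSet_singleton (0 : ℂ)).compl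
    have hband : ∀ f, Q f ∈ lpBand μ p A := by
      intro f
      filter_upwards [disj f w, hw] with x h1 h2 h3
      have h4 : (Q w : Ω₁ → ℂ) x = 0 := by simpa [A] using h3
      rw [h4, sub_zero] at h1
      exact (mul_eq_zero.1 h1).resolve_right h2
    refine ⟨A, hA, eq_of_lpBand_eq (p := p) hp_top (hΦmeas A hA) hB ?_⟩
    rw [← hΦ A hA]
    apply Set.Subset.antisymm
    · rintro _ ⟨f, hf, rfl⟩
      have h : Q f = f := by
        apply Lp.ext
        filter_upwards [disj w f, hf, hband f] with x h1 h2 h3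
        by_cases hx : x ∈ A
        · exact (sub_eq_zero.1 ((mul_eq_zero.1 h1).resolve_left hx)).symm
        · rw [h2 hx, h3 hx]
      rw [← h, TQ]
      exact bandProj_mem _ _ _
    · intro g hg
      refine ⟨Q (T.symm g), hband _, ?_⟩
      rw [TQ, T.apply_symm_apply]
      exact (bandProj_eq_self_iff _ _ _).2 hg
end
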